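/- (Wiener's lemma on the circle) Let μ be a finite complex Borel measure on the circle T = R/Z. Then μ({0}) = lim_{N→∞} (1/(2N+1)) Σ_{n=-N}^{N} μ̂(n), where μ̂(n) = ∫_T e^{-2πint} dμ(t). -/

import Mathlib

open MeasureTheory Filter Topology

/-- Integral of a complex-valued function against a finite complex measure. -/
noncomputable def cInt {α : Type*} [MeasurableSpace α]
    (μ : MeasureTheory.ComplexMeasure α) (f : α → ℂ) : ℂ :=
  ((∫ x, f x ∂μ.re.toJordanDecomposition.posPart)
      - ∫ x, f x ∂μ.re.toJordanDecomposition.negPart)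
    + Complex.I * ((∫ x, f x ∂μ.im.toJordanDecomposition.posPart)
      - ∫ x, f x ∂μ.im.toJordanDecomposition.negPart)

/-- The Fourier–Stieltjes coefficients of a finite complex measure on the circle `ℝ/ℤ`:
`μ̂(n) = ∫_𝕋 e^{-2πint} dμ(t)`. -/
noncomputable def fourierCoeff' (μ : MeasureTheory.ComplexMeasure UnitAddCircle)
    (n : ℤ) : ℂ :=
  cInt μ (fun t => fourier (-n) t)

/-!
The averages over `|n| ≤ N` of the functions `t ↦ e^{-2πint}` are bounded by `1`, and they converge
pointwise to the indicator function of `{0}`: they equal `1` at `0`, while elsewhere the geometric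
sums telescope and stay bounded as `N → ∞`. Dominated convergence then exchanges limit and
integral. The same argument works for the powers of any measurable function `f` of modulus one on
any measurable space, with `{f = 1}` in place of `{0}`.
-/

section ComplexIntegral

variable {α ι : Type*} [MeasurableSpace α] {μ : ComplexMeasure α}

/-- The sum of the four positive measures occurring in the Jordan decompositions of the real and
imaginary parts of `μ`. Hypotheses of integrability against `μ` are stated with it; it is
equivalent, up to a constant factor, to the variation of `μ`. -/
noncomputable def jordanVariation (μ : ComplexMeasure α) : Measure α :=
  μ.re.totalVariation + μ.im.totalVariation

instance isFiniteMeasure_jordanVariation : IsFiniteMeasure (jordanVariation μ) := by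
  unfold jordanVariation SignedMeasure.totalVariation
  infer_instance

lemma re_posPart_le_jordanVariation :
    μ.re.toJordanDecomposition.posPart ≤ jordanVariation μ :=
  (Measure.le_add_right le_rfl).trans (Measure.le_add_right le_rfl)

lemma re_negPart_le_jordanVariation :
    μ.re.toJordanDecomposition.negPart ≤ jordanVariation μ :=
  (Measure.le_add_left le_rfl).trans (Measure.le_add_right le_rfl)

lemma im_posPart_le_jordanVariation :
    μ.im.toJordanDecomposition.posPart ≤ jordanVariation μ :=
  (Measure.le_add_right le_rfl).trans (Measure.le_add_left le_rfl)

lemma im_negPart_le_jordanVariation :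
    μ.im.toJordanDecomposition.negPart ≤ jordanVariation μ :=
  (Measure.le_add_left le_rfl).trans (Measure.le_add_left le_rfl)

lemma cInt_const_mul (c : ℂ) (f : α → ℂ) : cInt μ (fun x => c * f x) = c * cInt μ f := by
  simp only [cInt, integral_const_mul]
  ring

lemma cInt_finsetSum (s : Finset ι) {f : ι → α → ℂ}
    (hf : ∀ i ∈ s, Integrable (f i) (jordanVariation μ)) :
    cInt μ (fun x => ∑ i ∈ s, f i x) = ∑ i ∈ s, cInt μ (f i) := by
  have integral_sum {ν : Measure α} (hν : ν ≤ jordanVariation μ) :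
      ∫ x, ∑ i ∈ s, f i x ∂ν = ∑ i ∈ s, ∫ x, f i x ∂ν :=
    integral_finsetSum s fun i hi => (hf i hi).mono_measure hν
  simp only [cInt, integral_sum re_posPart_le_jordanVariation,
    integral_sum re_negPart_le_jordanVariation, integral_sum im_posPart_le_jordanVariation,
    integral_sum im_negPart_le_jordanVariation, Finset.sum_add_distrib, Finset.sum_sub_distrib,
    ← Finset.mul_sum]

lemma cInt_indicator_one {s : Set α} (hs : MeasurableSet s) : cInt μ (s.indicator 1) = μ s := by
  have integral_indicator {ν : Measure α} [IsFiniteMeasure ν] :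
      ∫ x, s.indicator (1 : α → ℂ) x ∂ν = ν.real s :=
    (integral_indicator_const 1 hs).trans (by rw [Complex.real_smul, mul_one])
  rw [cInt, integral_indicator, integral_indicator, integral_indicator, integral_indicator,
    ← Complex.ofReal_sub, ← Complex.ofReal_sub,
    ← μ.re.apply_eq_posPart_real_sub_negPart_real hs,
    ← μ.im.apply_eq_posPart_real_sub_negPart_real hs, mul_comm]
  exact Complex.re_add_im (μ s)

lemma tendsto_cInt_of_dominated_convergence {l : Filter ι} [l.IsCountablyGenerated]
    {F : ι → α → ℂ} {f : α → ℂ} (bound : α → ℝ)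
    (hF : ∀ᶠ i in l, AEStronglyMeasurable (F i) (jordanVariation μ))
    (h_bound : ∀ᶠ i in l, ∀ᵐ x ∂jordanVariation μ, ‖F i x‖ ≤ bound x)
    (bound_integrable : Integrable bound (jordanVariation μ))
    (h_lim : ∀ᵐ x ∂jordanVariation μ, Tendsto (fun i => F i x) l (𝓝 (f x))) :
    Tendsto (fun i => cInt μ (F i)) l (𝓝 (cInt μ f)) := by
  have tendsto_integral {ν : Measure α} (hν : ν ≤ jordanVariation μ) :
      Tendsto (fun i => ∫ x, F i x ∂ν) l (𝓝 (∫ x, f x ∂ν)) :=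
    tendsto_integral_filter_of_dominated_convergence bound
      (hF.mono fun _ h => h.mono_measure hν) (h_bound.mono fun _ h => ae_mono hν h)
      (bound_integrable.mono_measure hν) (ae_mono hν h_lim)
  exact ((tendsto_integral re_posPart_le_jordanVariation).sub
    (tendsto_integral re_negPart_le_jordanVariation)).add
    (((tendsto_integral im_posPart_le_jordanVariation).sub
      (tendsto_integral im_negPart_le_jordanVariation)).const_mul Complex.I)

end ComplexIntegral

section DirichletKernel

/-- The Dirichlet kernel divided by its value at `1`, that is, the average of `z ^ n` over
`-N ≤ n ≤ N`. It is written in the variable `z = e^{2πit}` instead of `t`. -/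
noncomputable def normalizedDirichletKernel (N : ℕ) (z : ℂ) : ℂ :=
  (2 * (N : ℂ) + 1)⁻¹ * ∑ n ∈ Finset.Icc (-(N : ℤ)) N, z ^ n

lemma card_Icc_neg_natCast (N : ℕ) : (Finset.Icc (-(N : ℤ)) N).card = 2 * N + 1 := by
  rw [Int.card_Icc]
  lia

lemma norm_normalizedDirichletKernel (N : ℕ) (z : ℂ) :
    ‖normalizedDirichletKernel N z‖ =
      (2 * (N : ℝ) + 1)⁻¹ * ‖∑ n ∈ Finset.Icc (-(N : ℤ)) N, z ^ n‖ := by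
  have norm_card : ‖2 * (N : ℂ) + 1‖ = 2 * N + 1 := by
    exact_mod_cast Complex.norm_natCast (2 * N + 1)
  rw [normalizedDirichletKernel, norm_mul, norm_inv, norm_card]

lemma measurable_normalizedDirichletKernel (N : ℕ) :
    Measurable (normalizedDirichletKernel N) := by
  unfold normalizedDirichletKernel
  fun_prop

lemma normalizedDirichletKernel_one (N : ℕ) : normalizedDirichletKernel N 1 = 1 := by
  have card_ne_zero : 2 * (N : ℂ) + 1 ≠ 0 := by exact_mod_cast (2 * N).succ_ne_zero
  simp only [normalizedDirichletKernel, one_zpow, Finset.sum_const, card_Icc_neg_natCast,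
    nsmul_eq_mul, mul_one]
  push_cast
  exact inv_mul_cancel₀ card_ne_zero

lemma norm_normalizedDirichletKernel_le_one (N : ℕ) {z : ℂ} (hz : ‖z‖ = 1) :
    ‖normalizedDirichletKernel N z‖ ≤ 1 := by
  rw [norm_normalizedDirichletKernel, inv_mul_le_one₀ (by positivity)]
  calc ‖∑ n ∈ Finset.Icc (-(N : ℤ)) N, z ^ n‖
      ≤ ∑ n ∈ Finset.Icc (-(N : ℤ)) N, ‖z ^ n‖ := norm_sum_le _ _
    _ = 2 * N + 1 := by
      simp only [norm_zpow, hz, one_zpow, Finset.sum_const, card_Icc_neg_natCast, nsmul_eq_mul,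
        mul_one]
      push_cast
      rfl

lemma sub_one_mul_sum_Icc_zpow {K : Type*} [DivisionRing K] {z : K} (hz : z ≠ 0) (N : ℕ) :
    (z - 1) * ∑ n ∈ Finset.Icc (-(N : ℤ)) N, z ^ n = z ^ (N + 1 : ℤ) - z ^ (-N : ℤ) := by
  induction N with
  | zero => simp
  | succ N ih =>
    have mul_zpow (n : ℤ) : z * z ^ n = z ^ (n + 1) := by rw [add_comm, zpow_one_add₀ hz]
    rw [Nat.cast_succ, Finset.sum_Icc_succ_eq_add_endpoints, mul_add, ih, sub_mul, one_mul,
      mul_add, mul_zpow, mul_zpow, neg_add, neg_add_cancel_right]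
    abel

lemma norm_sum_Icc_zpow_le {K : Type*} [NormedDivisionRing K] {z : K} (hz : ‖z‖ = 1)
    (hz_ne : z ≠ 1) (N : ℕ) :
    ‖∑ n ∈ Finset.Icc (-(N : ℤ)) N, z ^ n‖ ≤ 2 / ‖z - 1‖ := by
  have hz₀ : z ≠ 0 := norm_ne_zero_iff.mp (hz ▸ one_ne_zero)
  rw [le_div_iff₀' (norm_sub_pos_iff.mpr hz_ne), ← norm_mul, sub_one_mul_sum_Icc_zpow hz₀]
  calc ‖z ^ (N + 1 : ℤ) - z ^ (-N : ℤ)‖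
      ≤ ‖z ^ (N + 1 : ℤ)‖ + ‖z ^ (-N : ℤ)‖ := norm_sub_le _ _
    _ = 2 := by rw [norm_zpow, norm_zpow, hz, one_zpow, one_zpow, one_add_one_eq_two]

lemma tendsto_normalizedDirichletKernel_of_ne_one {z : ℂ} (hz : ‖z‖ = 1) (hz_ne : z ≠ 1) :
    Tendsto (fun N => normalizedDirichletKernel N z) atTop (𝓝 0) := by
  have tendsto_bound :
      Tendsto (fun N : ℕ => (2 * (N : ℝ) + 1)⁻¹ * (2 / ‖z - 1‖)) atTop (𝓝 0) := by
    rw [← zero_mul (2 / ‖z - 1‖)]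
    exact (tendsto_inv_atTop_zero.comp (tendsto_atTop_add_const_right _ _
      (tendsto_natCast_atTop_atTop.const_mul_atTop two_pos))).mul_const _
  refine squeeze_zero_norm (fun N => ?_) tendsto_bound
  rw [norm_normalizedDirichletKernel]
  gcongr
  exact norm_sum_Icc_zpow_le hz hz_ne N

lemma tendsto_normalizedDirichletKernel {z : ℂ} (hz : ‖z‖ = 1) :
    Tendsto (fun N => normalizedDirichletKernel N z) atTop
      (𝓝 (({1} : Set ℂ).indicator 1 z)) := by
  rcases eq_or_ne z 1 with rfl | hz_ne
  · simp [normalizedDirichletKernel_one]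
  · simpa [hz_ne] using tendsto_normalizedDirichletKernel_of_ne_one hz hz_ne

end DirichletKernel

lemma cInt_normalizedDirichletKernel {α : Type*} [MeasurableSpace α] (μ : ComplexMeasure α)
    {f : α → ℂ} (hf : Measurable f) (hf_norm : ∀ x, ‖f x‖ = 1) (N : ℕ) :
    cInt μ (fun x => normalizedDirichletKernel N (f x)) =
      (2 * (N : ℂ) + 1)⁻¹ * ∑ n ∈ Finset.Icc (-(N : ℤ)) N, cInt μ (fun x => f x ^ n) := by
  have integrable_zpow (n : ℤ) : Integrable (fun x => f x ^ n) (jordanVariation μ) :=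
    .of_bound (hf.pow_const n).aestronglyMeasurable 1
      (.of_forall fun x => by rw [norm_zpow, hf_norm, one_zpow])
  simp only [normalizedDirichletKernel]
  rw [cInt_const_mul, cInt_finsetSum _ fun n _ => integrable_zpow n]

theorem wiener_lemma_circle_general {α : Type*} [MeasurableSpace α] (μ : ComplexMeasure α)
    {f : α → ℂ} (hf : Measurable f) (hf_norm : ∀ x, ‖f x‖ = 1) :
    Tendsto (fun N : ℕ =>
        (2 * (N : ℂ) + 1)⁻¹ * ∑ n ∈ Finset.Icc (-(N : ℤ)) N, cInt μ (fun x => f x ^ n))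
      atTop (𝓝 (μ (f ⁻¹' {1}))) := by
  simp only [← cInt_normalizedDirichletKernel μ hf hf_norm]
  rw [← cInt_indicator_one (hf (measurableSet_singleton 1))]
  exact tendsto_cInt_of_dominated_convergence (fun _ => 1)
    (.of_forall fun N =>
      ((measurable_normalizedDirichletKernel N).comp hf).aestronglyMeasurable)
    (.of_forall fun N => .of_forall fun x => norm_normalizedDirichletKernel_le_one N (hf_norm x))
    (integrable_const 1) (.of_forall fun x => tendsto_normalizedDirichletKernel (hf_norm x))

lemma fourier_mul_eq_zpow {T : ℝ} (m n : ℤ) (t : AddCircle T) :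
    fourier (m * n) t = fourier m t ^ n := by
  rw [fourier_apply, fourier_apply, mul_zsmul', AddCircle.toCircle_zsmul, Circle.coe_zpow]

lemma fourier_neg_one_eq_one_iff {T : ℝ} (hT : T ≠ 0) {t : AddCircle T} :
    fourier (-1) t = 1 ↔ t = 0 := by
  rw [fourier_apply, neg_one_zsmul, Circle.coe_eq_one, ← AddCircle.toCircle_zero,
    (AddCircle.injective_toCircle hT).eq_iff, neg_eq_zero]

/-- **Wiener's lemma on the circle.** For a finite complex Borel measure `μ` on `𝕋 = ℝ/ℤ`,
`μ({0}) = lim_{N→∞} (1/(2N+1)) ∑_{n=-N}^{N} μ̂(n)`. -/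
theorem wiener_lemma_circle (μ : MeasureTheory.ComplexMeasure UnitAddCircle) :
    Tendsto (fun N : ℕ =>
        ((2 * (N : ℂ) + 1))⁻¹ * ∑ n ∈ Finset.Icc (-(N : ℤ)) (N : ℤ), fourierCoeff' μ n)
      atTop (𝓝 (μ {(0 : UnitAddCircle)})) := by
  have preimage_one : (fourier (-1) : UnitAddCircle → ℂ) ⁻¹' {1} = {0} :=
    Set.ext fun _ => fourier_neg_one_eq_one_iff one_ne_zero
  simpa only [fourierCoeff', ← fourier_mul_eq_zpow, neg_one_mul, preimage_one] using
    wiener_lemma_circle_general μ (fourier (-1)).measurable fun _ => Circle.norm_coe _
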